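/- (Non-systematic RKRP codes are MDS with probability 1.) Let m, n, N ≥ 1 with N ≥ mn and set K = mn. For Lebesgue-almost every pair (P, Q) ∈ ℝ^{N×m} × ℝ^{N×n}, the following holds: for every subset R ⊆ [N] of row indices with |R| = K, the K×K submatrix of the row-wise Khatri-Rao product P ⊙ Q consisting of the rows in R is invertible. In particular, the N×K matrix G = P ⊙ Q is almost surely the generator matrix of a maximum distance separable code: the message vector w ∈ ℝ^K can be recovered from any K of the N entries of Gw. -/

import Mathlib

open MeasureTheory

/-- The row-wise Khatri-Rao product of `P : ℝ^{N×m}` and `Q : ℝ^{N×n}`. -/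
def rowKhatriRao {N m n : Type*} (P : Matrix N m ℝ) (Q : Matrix N n ℝ) :
    Matrix N (m × n) ℝ :=
  fun i jl => P i jl.1 * Q i jl.2

/-!
For a fixed injective selection of `mn` rows, the determinant of the selected square submatrix of
`P ⊙ Q` is a polynomial in the entries of `(P, Q)`. It does not vanish identically: choosing
Kronecker deltas as rows of `P` and `Q` turns the submatrix into the identity. A nonzero analytic
function vanishes only on a null set, because along each line through a point where it is nonzero
its zeros are isolated. Finally there are only finitely many selections.
-/

theorem ae_ne_zero_of_analyticOnNhd_field {𝕜 F : Type*} [NontriviallyNormedField 𝕜]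
    [ConnectedSpace 𝕜] [SecondCountableTopology 𝕜] [MeasurableSpace 𝕜] {ν : Measure 𝕜}
    [NullSingletonClass ν] [NormedAddCommGroup F] [NormedSpace 𝕜 F] {f : 𝕜 → F}
    (hf : AnalyticOnNhd 𝕜 f Set.univ) {t₀ : 𝕜} (ht₀ : f t₀ ≠ 0) : ∀ᵐ t ∂ν, f t ≠ 0 := by
  have hae : f ⁻¹' {0}ᶜ ∈ ae (ν.restrict Set.univ) :=
    ae_restrict_le_codiscreteWithin MeasurableSet.univ (hf.preimage_zero_mem_codiscrete ht₀)
  rwa [Measure.restrict_univ] at hae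

section AddHaar

variable {E : Type*} [NormedAddCommGroup E] [NormedSpace ℝ E] [FiniteDimensional ℝ E]
  [MeasurableSpace E] [BorelSpace E] {μ : Measure E} [μ.IsAddHaarMeasure]

theorem ae_of_ae_add_smul {p : E → Prop} (x₀ : E) {t : ℝ} (ht : t ≠ 0)
    (h : ∀ᵐ v ∂μ, p (x₀ + t • v)) : ∀ᵐ x ∂μ, p x := by
  have hnull : μ ((t • ·) ⁻¹' ((x₀ + ·) ⁻¹' {x | ¬ p x})) = 0 := h
  rw [Measure.addHaar_preimage_smul μ ht, measure_preimage_add] at hnull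
  refine (mul_eq_zero.1 hnull).resolve_left ?_
  simpa using pow_pos (abs_pos.2 ht) _

/- Fubini exchanges directions and parameters, so that almost every dilation about `x₀` satisfies
`p` almost everywhere; a single nonzero dilation factor then suffices. -/
theorem ae_of_ae_ae_add_smul {p : E → Prop} (hp : MeasurableSet {x | p x}) (x₀ : E)
    (h : ∀ᵐ v ∂μ, ∀ᵐ t : ℝ, p (x₀ + t • v)) : ∀ᵐ x ∂μ, p x := by
  have hmeas : MeasurableSet {z : E × ℝ | p (x₀ + z.2 • z.1)} :=
    (show Measurable fun z : E × ℝ => x₀ + z.2 • z.1 by fun_prop) hp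
  have hswap : ∀ᵐ t : ℝ, ∀ᵐ v ∂μ, p (x₀ + t • v) :=
    (Measure.ae_ae_comm (p := fun v (t : ℝ) => p (x₀ + t • v)) hmeas).1 h
  obtain ⟨t, ht, ht0⟩ := (hswap.and (Measure.ae_ne volume (0 : ℝ))).exists
  exact ae_of_ae_add_smul x₀ ht0 ht

theorem ae_ne_zero_of_analyticOnNhd {F : Type*} [NormedAddCommGroup F] [NormedSpace ℝ F]
    {f : E → F} (hf : AnalyticOnNhd ℝ f Set.univ) {x₀ : E} (hx₀ : f x₀ ≠ 0) :
    ∀ᵐ x ∂μ, f x ≠ 0 := by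
  have hcont : Continuous f := continuousOn_univ.1 hf.continuousOn
  have hopen : IsOpen {x | f x ≠ 0} := isOpen_ne_fun hcont continuous_const
  refine ae_of_ae_ae_add_smul hopen.measurableSet x₀ (.of_forall fun v => ?_)
  have hline : AnalyticOnNhd ℝ (fun t : ℝ => f (x₀ + t • v)) Set.univ := fun t _ =>
    (hf (x₀ + t • v) trivial).fun_comp (f := fun t : ℝ => x₀ + t • v) (by fun_prop)
  exact ae_ne_zero_of_analyticOnNhd_field hline (t₀ := 0) (by simpa using hx₀)

end AddHaar

theorem analyticAt_matrix_det {𝕜 E A k : Type*} [NontriviallyNormedField 𝕜]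
    [NormedAddCommGroup E] [NormedSpace 𝕜 E] [NormedCommRing A] [NormedAlgebra 𝕜 A] [Fintype k]
    [DecidableEq k] {M : E → Matrix k k A} {x : E}
    (hM : ∀ i j, AnalyticAt 𝕜 (fun y => M y i j) x) : AnalyticAt 𝕜 (fun y => (M y).det) x := by
  simp only [Matrix.det_apply, Units.smul_def, zsmul_eq_mul]
  fun_prop

/-- `G` generates a maximum distance separable code: every selection of as many distinct rows as
`G` has columns is an invertible matrix. The columns themselves index the selected rows, so no
enumeration of them is needed. If `G` has fewer rows than columns the condition is vacuous. -/
def IsMDSGenerator {N ι R : Type*} [Semiring R] [Fintype ι] [DecidableEq ι]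
    (G : Matrix N ι R) : Prop :=
  ∀ r : ι → N, Function.Injective r → IsUnit (G.submatrix r id)

namespace IsMDSGenerator

variable {N ι k R : Type*} [Semiring R] [Fintype ι] [DecidableEq ι] {G : Matrix N ι R} {r : k → N}

theorem isUnit_submatrix [Fintype k] [DecidableEq k] (hG : IsMDSGenerator G)
    (hr : Function.Injective r) (e : k ≃ ι) : IsUnit (G.submatrix r e) := by
  have hunit := hG (r ∘ e.symm) (hr.comp e.symm.injective)
  simpa [Matrix.submatrix_submatrix, Function.comp_assoc] using
    hunit.map (Matrix.reindexRingEquiv R e.symm)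

theorem injective_mulVec_comp (hG : IsMDSGenerator G) (hr : Function.Injective r) (e : k ≃ ι) :
    Function.Injective fun w => (G.mulVec w) ∘ r := by
  intro w w' hw
  apply Matrix.mulVec_injective_of_isUnit (hG (r ∘ e.symm) (hr.comp e.symm.injective))
  ext i
  exact congrFun hw (e.symm i)

end IsMDSGenerator

section RowKhatriRao

open scoped ContDiff

variable {N m n : Type*} [DecidableEq m] [DecidableEq n]

theorem exists_rowKhatriRao_submatrix_eq_one {r : m × n → N} (hr : Function.Injective r) :
    ∃ (P : Matrix N m ℝ) (Q : Matrix N n ℝ), (rowKhatriRao P Q).submatrix r id = 1 := by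
  refine ⟨Function.extend r (fun jl => Pi.single jl.1 1) 0,
    Function.extend r (fun jl => Pi.single jl.2 1) 0, ?_⟩
  ext ⟨j, l⟩ ⟨j', l'⟩
  simp [rowKhatriRao, hr.extend_apply, Pi.single_apply, Matrix.one_apply, ← ite_and, eq_comm,
    and_comm]

variable [Fintype N] [Fintype m] [Fintype n]

theorem analyticOnNhd_det_rowKhatriRao_submatrix (r : m × n → N) :
    AnalyticOnNhd ℝ (fun pq : (N → m → ℝ) × (N → n → ℝ) =>
      ((rowKhatriRao (Matrix.of pq.1) (Matrix.of pq.2)).submatrix r id).det) Set.univ := by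
  intro pq _
  refine analyticAt_matrix_det fun a b => ?_
  have hentry : ContDiff ℝ ω fun pq : (N → m → ℝ) × (N → n → ℝ) =>
      pq.1 (r a) b.1 * pq.2 (r a) b.2 := by fun_prop
  exact hentry.contDiffAt.analyticAt

theorem ae_isUnit_rowKhatriRao_submatrix {r : m × n → N} (hr : Function.Injective r) :
    ∀ᵐ pq : (N → m → ℝ) × (N → n → ℝ) ∂volume,
      IsUnit ((rowKhatriRao (Matrix.of pq.1) (Matrix.of pq.2)).submatrix r id) := by
  obtain ⟨P, Q, hPQ⟩ := exists_rowKhatriRao_submatrix_eq_one hr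
  -- Instance search fails on nested function types, so the instances are given explicitly.
  have hHaar : (volume : Measure ((N → m → ℝ) × (N → n → ℝ))).IsAddHaarMeasure :=
    have : (volume : Measure (N → m → ℝ)).IsAddHaarMeasure := Measure.pi.isAddHaarMeasure _
    have : (volume : Measure (N → n → ℝ)).IsAddHaarMeasure := Measure.pi.isAddHaarMeasure _
    Measure.prod.instIsAddHaarMeasure _ _
  have hdet := ae_ne_zero_of_analyticOnNhd (μ := volume)
    (analyticOnNhd_det_rowKhatriRao_submatrix r) (x₀ := (Matrix.of.symm P, Matrix.of.symm Q))
    (by simp [hPQ])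
  filter_upwards [hdet] with pq hpq
  exact (Matrix.isUnit_iff_isUnit_det _).2 hpq.isUnit

theorem nonsystematic_RKRP_is_MDS_general :
    ∀ᵐ pq : (N → m → ℝ) × (N → n → ℝ) ∂volume,
      IsMDSGenerator (rowKhatriRao (Matrix.of pq.1) (Matrix.of pq.2)) := by
  simp only [IsMDSGenerator, ae_all_iff]
  exact fun r hr => ae_isUnit_rowKhatriRao_submatrix hr

end RowKhatriRao

/-- Non-systematic RKRP codes are MDS with probability 1: for Lebesgue-almost
every `(P, Q)`, every `K × K` submatrix of `G = P ⊙ Q` (with `K = mn`)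
obtained by selecting any `K` of its `N` rows is invertible; in particular the
message `w` can be recovered from any `K` entries of `G *ᵥ w`. -/
theorem nonsystematic_RKRP_is_MDS (m n N : ℕ)
    (hm : 1 ≤ m) (hn : 1 ≤ n) (hN : 1 ≤ N) (hNmn : m * n ≤ N) :
    ∀ᵐ pq : (Fin N → Fin m → ℝ) × (Fin N → Fin n → ℝ) ∂volume,
      ∀ r : Fin (m * n) → Fin N, Function.Injective r →
        (IsUnit
            ((rowKhatriRao (Matrix.of pq.1) (Matrix.of pq.2)).submatrix r
              (⇑finProdFinEquiv.symm)) ∧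
          ∀ w w' : Fin m × Fin n → ℝ,
            (∀ i : Fin (m * n),
                (rowKhatriRao (Matrix.of pq.1) (Matrix.of pq.2)).mulVec w (r i) =
                (rowKhatriRao (Matrix.of pq.1) (Matrix.of pq.2)).mulVec w' (r i)) →
              w = w') := by
  filter_upwards [nonsystematic_RKRP_is_MDS_general] with pq hG r hr
  exact ⟨hG.isUnit_submatrix hr _, fun w w' hw =>
    hG.injective_mulVec_comp hr finProdFinEquiv.symm (funext hw)⟩
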